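/- Consider the edge-based discrete diffusion protocol on a graph G on n ≥ 2 vertices with maximum degree Δ, with parameter γ > 1, starting from x^{(0)} = ξ^{(0)} ∈ ℤ^n, alongside the continuous diffusion ξ^{(t)} = ξ^{(0)}P^t. Then for any round t, P( max_{w∈V} |x_w^{(t)} − ξ_w^{(t)}| ≥ 4·√(log n)·√(γΔ/(2 − 2/γ)) ) ≤ 2·n^{−1}; in particular, for constant γ the deviation between the discrete and continuous case is O(√(Δ·log n)) with probability at least 1 − 2n^{−1}. -/

import Mathlib

namespace LB


/-- The diffusion matrix `P = P(γ)` of a graph `G` with maximum degree `Δ`: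
`P_{u,v} = 1/(γΔ)` if `{u,v} ∈ E`, `P_{u,u} = 1 - deg(u)/(γΔ)`, and `0` otherwise. -/
noncomputable def diffMatrix {n : ℕ} (G : SimpleGraph (Fin n)) [DecidableRel G.Adj]
    (γ : ℝ) : Matrix (Fin n) (Fin n) ℝ :=
  Matrix.of fun u v =>
    if G.Adj u v then 1 / (γ * G.maxDegree)
    else if u = v then 1 - (G.degree u : ℝ) / (γ * G.maxDegree)
    else 0

/-- Sum of `g u v` over the edges `[u:v] ∈ E` (i.e. `{u,v} ∈ E` with `u < v`). -/
noncomputable def edgeSum {n : ℕ} (G : SimpleGraph (Fin n)) [DecidableRel G.Adj]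
    (g : Fin n → Fin n → ℝ) : ℝ :=
  ∑ u : Fin n, ∑ v : Fin n, if u < v ∧ G.Adj u v then g u v else 0

/-- The local 2-divergence `Ψ₂(P)` of the diffusion matrix. -/
noncomputable def psi2Diff {n : ℕ} (G : SimpleGraph (Fin n)) [DecidableRel G.Adj]
    (γ : ℝ) : ℝ :=
  ⨆ w : Fin n, Real.sqrt (⨆ T : ℕ, ∑ t ∈ Finset.range (T + 1),
    edgeSum G fun u v => ((diffMatrix G γ ^ t) w u - (diffMatrix G γ ^ t) w v) ^ 2)

/-- Supremum of `g v` over the neighbors `v` of `u` (zero if `u` is isolated). -/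
noncomputable def nbrSup {n : ℕ} (G : SimpleGraph (Fin n)) (u : Fin n)
    (g : Fin n → ℝ) : ℝ :=
  ⨆ v : G.neighborSet u, g v

/-- The refined local 2-divergence `Υ₂(P)` of the diffusion matrix. -/
noncomputable def ups2Diff {n : ℕ} (G : SimpleGraph (Fin n)) [DecidableRel G.Adj]
    (γ : ℝ) : ℝ :=
  ⨆ w : Fin n, Real.sqrt (⨆ T : ℕ, ∑ t ∈ Finset.range (T + 1),
    (1 / 2) * ∑ u : Fin n,
      nbrSup G u fun v => ((diffMatrix G γ ^ t) w u - (diffMatrix G γ ^ t) w v) ^ 2)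

open Classical in
/-- Randomly rounded flow along the edge `[u:v]` (`u < v`): the continuous flow
`f = (x_v - x_u)/(γΔ)` from `v` to `u` is rounded up iff the uniform sample
`r u v ∈ [0,1]` is below the fractional part of `f` (so `⌈f⌉` has probability
`f - ⌊f⌋`, and an integral flow is never altered). -/
noncomputable def diffFlow {n : ℕ} (G : SimpleGraph (Fin n)) [DecidableRel G.Adj]
    (γ : ℝ) (r : Fin n → Fin n → ℝ) (x : Fin n → ℤ) (u v : Fin n) : ℤ :=
  if r u v < Int.fract (((x v : ℝ) - (x u : ℝ)) / (γ * G.maxDegree))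
  then ⌈((x v : ℝ) - (x u : ℝ)) / (γ * G.maxDegree)⌉
  else ⌊((x v : ℝ) - (x u : ℝ)) / (γ * G.maxDegree)⌋

/-- One round of the edge-based discrete diffusion protocol. -/
noncomputable def diffStep {n : ℕ} (G : SimpleGraph (Fin n)) [DecidableRel G.Adj]
    (γ : ℝ) (r : Fin n → Fin n → ℝ) (x : Fin n → ℤ) : Fin n → ℤ := fun u =>
  x u + ∑ v : Fin n,
    if G.Adj u v then (if u < v then diffFlow G γ r x u v else -diffFlow G γ r x v u)
    else 0

/-- The edge-based discrete diffusion process: round `t ≥ 1` uses the uniform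
samples `R t : Fin n → Fin n → ℝ` (read at pairs `(u,v)` with `u < v`). -/
noncomputable def diffLoads {n : ℕ} (G : SimpleGraph (Fin n)) [DecidableRel G.Adj]
    (γ : ℝ) (R : ℕ → Fin n → Fin n → ℝ) (x : Fin n → ℤ) : ℕ → Fin n → ℤ
  | 0 => x
  | t + 1 => diffStep G γ (R (t + 1)) (diffLoads G γ R x t)


section helpers
open MeasureTheory

variable {n : ℕ} (G : SimpleGraph (Fin n)) [DecidableRel G.Adj]

noncomputable def lapl (a : Fin n → ℝ) (u : Fin n) : ℝ :=
  ∑ v, if G.Adj u v then a u - a v else 0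

noncomputable def enrg (a : Fin n → ℝ) : ℝ := edgeSum G fun u v => (a u - a v) ^ 2

lemma sum_symm (h : Fin n → Fin n → ℝ) :
    (∑ u, ∑ v, if G.Adj u v then h u v else 0) =
      ∑ u, ∑ v, if u < v ∧ G.Adj u v then h u v + h v u else 0 := by
  have e1 : (∑ u, ∑ v, if G.Adj u v then h u v else 0) =
      (∑ u, ∑ v, if u < v ∧ G.Adj u v then h u v else 0) +
      (∑ u, ∑ v, if v < u ∧ G.Adj u v then h u v else 0) := by
    rw [← Finset.sum_add_distrib]
    refine Finset.sum_congr rfl fun u _ => ?_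
    rw [← Finset.sum_add_distrib]
    refine Finset.sum_congr rfl fun v _ => ?_
    by_cases hA : G.Adj u v
    · have hne : u ≠ v := hA.ne
      rcases lt_or_gt_of_ne hne with h1 | h1
      · simp [hA, h1, not_lt_of_gt h1]
      · simp [hA, h1, not_lt_of_gt h1]
    · simp [hA]
  rw [e1, Finset.sum_comm (f := fun u v => if v < u ∧ G.Adj u v then h u v else 0),
    ← Finset.sum_add_distrib]
  refine Finset.sum_congr rfl fun u _ => ?_
  rw [← Finset.sum_add_distrib]
  refine Finset.sum_congr rfl fun v _ => ?_
  by_cases hA : G.Adj u v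
  · simp only [hA, hA.symm, and_true]
    split_ifs <;> simp
  · have hA' : ¬ G.Adj v u := fun h => hA h.symm
    simp [hA, hA']

lemma deg_sum (u : Fin n) : (G.degree u : ℝ) = ∑ v, if G.Adj u v then (1 : ℝ) else 0 := by
  simp [Finset.sum_boole, ← SimpleGraph.card_neighborFinset_eq_degree,
    SimpleGraph.neighborFinset_eq_filter]

lemma mulVec_eq (γ : ℝ) (a : Fin n → ℝ) (u : Fin n) :
    (diffMatrix G γ).mulVec a u = a u - lapl G a u / (γ * G.maxDegree) := by
  have e : ∀ v, diffMatrix G γ u v * a v =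
      (if G.Adj u v then a v / (γ * G.maxDegree) else 0) +
      (if u = v then (1 - (G.degree u : ℝ) / (γ * G.maxDegree)) * a v else 0) := by
    intro v
    unfold diffMatrix
    by_cases hA : G.Adj u v
    · simp [hA, hA.ne]; ring
    · simp [hA]
  have e2 : lapl G a u / (γ * G.maxDegree) = (G.degree u : ℝ) / (γ * G.maxDegree) * a u
      - ∑ v, (if G.Adj u v then a v / (γ * G.maxDegree) else 0) := by
    rw [deg_sum, lapl, Finset.sum_div, Finset.sum_div, Finset.sum_mul, ← Finset.sum_sub_distrib]
    refine Finset.sum_congr rfl fun v _ => ?_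
    split_ifs <;> ring
  rw [e2]
  simp only [Matrix.mulVec, dotProduct, e]
  rw [Finset.sum_add_distrib]
  simp
  ring

lemma diffMatrix_symm (γ : ℝ) : (diffMatrix G γ).transpose = diffMatrix G γ := by
  ext u v
  simp only [Matrix.transpose_apply, diffMatrix, Matrix.of_apply, G.adj_comm v u, eq_comm (a := v)]
  split_ifs with h1 h2
  · rfl
  · rw [h2]
  · rfl

lemma lapl_inner (a : Fin n → ℝ) : ∑ u, a u * lapl G a u = enrg G a := by
  have : ∑ u, a u * lapl G a u = ∑ u, ∑ v, if G.Adj u v then a u * (a u - a v) else 0 := by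
    simp only [lapl, Finset.mul_sum, mul_ite, mul_zero]
  rw [this, sum_symm, enrg, edgeSum]
  refine Finset.sum_congr rfl fun u _ => Finset.sum_congr rfl fun v _ => ?_
  split_ifs <;> ring

lemma lapl_sq (a : Fin n → ℝ) : ∑ u, lapl G a u ^ 2 ≤ 2 * G.maxDegree * enrg G a := by
  have h2 : 2 * enrg G a = ∑ u, ∑ v, if G.Adj u v then (a u - a v) ^ 2 else 0 := by
    rw [sum_symm, enrg, edgeSum, Finset.mul_sum]
    refine Finset.sum_congr rfl fun u _ => ?_
    rw [Finset.mul_sum]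
    refine Finset.sum_congr rfl fun v _ => ?_
    split_ifs <;> ring
  rw [show 2 * (G.maxDegree : ℝ) * enrg G a = G.maxDegree * (2 * enrg G a) by ring, h2,
    Finset.mul_sum]
  refine Finset.sum_le_sum fun u _ => ?_
  unfold lapl
  rw [← Finset.sum_filter, ← Finset.sum_filter]
  refine sq_sum_le_card_mul_sum_sq.trans ?_
  refine mul_le_mul_of_nonneg_right ?_ (Finset.sum_nonneg fun _ _ => sq_nonneg _)
  · rw [← SimpleGraph.neighborFinset_eq_filter, SimpleGraph.card_neighborFinset_eq_degree]
    exact_mod_cast G.degree_le_maxDegree u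

lemma energy_step (γ : ℝ) (hγ : 1 < γ) (hΔ : 0 < G.maxDegree) (a : Fin n → ℝ) :
    (2 - 2 / γ) / (γ * G.maxDegree) * enrg G a ≤
      ∑ u, a u ^ 2 - ∑ u, ((diffMatrix G γ).mulVec a u) ^ 2 := by
  have hD : (0 : ℝ) < G.maxDegree := by exact_mod_cast hΔ
  have hg : 0 < γ * G.maxDegree := by positivity
  have e : ∑ u, a u ^ 2 - ∑ u, ((diffMatrix G γ).mulVec a u) ^ 2 =
      2 / (γ * G.maxDegree) * (∑ u, a u * lapl G a u)
        - 1 / (γ * G.maxDegree) ^ 2 * ∑ u, lapl G a u ^ 2 := by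
    rw [← Finset.sum_sub_distrib, Finset.mul_sum, Finset.mul_sum, ← Finset.sum_sub_distrib]
    refine Finset.sum_congr rfl fun u _ => ?_
    rw [mulVec_eq]
    ring
  rw [e, lapl_inner]
  have h := mul_le_mul_of_nonneg_left (lapl_sq G a)
    (show (0:ℝ) ≤ 1 / (γ * G.maxDegree) ^ 2 by positivity)
  have e3 : 1 / (γ * G.maxDegree) ^ 2 * (2 * G.maxDegree * enrg G a)
    = 2 / γ / (γ * G.maxDegree) * enrg G a := by
    field_simp
  rw [e3] at h
  have : (2 - 2 / γ) / (γ * G.maxDegree) * enrg G a = 2 / (γ * G.maxDegree) * enrg G a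
    - 2 / γ / (γ * G.maxDegree) * enrg G a := by ring
  linarith

lemma energy_sum (γ : ℝ) (hγ : 1 < γ) (hΔ : 0 < G.maxDegree) (T : ℕ) (a : Fin n → ℝ) :
    ∑ s ∈ Finset.range T, enrg G ((diffMatrix G γ ^ s).mulVec a) ≤
      γ * G.maxDegree / (2 - 2 / γ) * ∑ u, a u ^ 2 := by
  have hD : (0 : ℝ) < G.maxDegree := by exact_mod_cast hΔ
  have hg : 0 < γ * G.maxDegree := by positivity
  have hc : 0 < 2 - 2 / γ := by
    have : 2 / γ < 2 := by rw [div_lt_iff₀ (by linarith)]; linarith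
    linarith
  have key : (2 - 2 / γ) / (γ * G.maxDegree) *
      ∑ s ∈ Finset.range T, enrg G ((diffMatrix G γ ^ s).mulVec a) ≤
      ∑ u, a u ^ 2 - ∑ u, ((diffMatrix G γ ^ T).mulVec a u) ^ 2 := by
    induction T with
    | zero => simp
    | succ T ih =>
      rw [Finset.sum_range_succ, mul_add]
      have := energy_step G γ hγ hΔ ((diffMatrix G γ ^ T).mulVec a)
      rw [Matrix.mulVec_mulVec, ← pow_succ'] at this
      linarith
  have h0 : 0 ≤ ∑ u, ((diffMatrix G γ ^ T).mulVec a u) ^ 2 :=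
    Finset.sum_nonneg fun _ _ => sq_nonneg _
  have h3 := key.trans (sub_le_self _ h0)
  have := mul_le_mul_of_nonneg_left h3 (show 0 ≤ γ * G.maxDegree / (2 - 2 / γ) by positivity)
  rw [← mul_assoc, div_mul_div_cancel₀ hc.ne', div_self hg.ne', one_mul] at this
  exact this

noncomputable def derr (γ : ℝ) (r : Fin n → Fin n → ℝ) (x : Fin n → ℤ) (u v : Fin n) : ℝ :=
  diffFlow G γ r x u v - ((x v : ℝ) - (x u : ℝ)) / (γ * G.maxDegree)

noncomputable def cc (a : Fin n → ℝ) (u v : Fin n) : ℝ :=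
  if u < v ∧ G.Adj u v then a u - a v else 0

lemma step_eq (γ : ℝ) (r : Fin n → Fin n → ℝ) (x : Fin n → ℤ) (a : Fin n → ℝ) :
    ∑ u, a u * (diffStep G γ r x u : ℝ) =
      ∑ u, (diffMatrix G γ).mulVec a u * x u + ∑ u, ∑ v, cc G a u v * derr G γ r x u v := by
  have h1 : ∑ u, (diffMatrix G γ).mulVec a u * (x u : ℝ) =
      ∑ u, a u * (diffMatrix G γ).mulVec (fun u => (x u : ℝ)) u := by
    have := Matrix.dotProduct_mulVec (fun u => (x u : ℝ)) (diffMatrix G γ) a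
    rw [← Matrix.mulVec_transpose, diffMatrix_symm] at this
    simp only [dotProduct] at this
    simp only [mul_comm _ ((x _ : ℤ) : ℝ)] 
    rw [this]
    exact Finset.sum_congr rfl fun _ _ => mul_comm _ _
  have h2 : ∀ u, (diffStep G γ r x u : ℝ) = (diffMatrix G γ).mulVec (fun u => (x u : ℝ)) u +
      ∑ v, if G.Adj u v then (if u < v then derr G γ r x u v else -derr G γ r x v u) else 0 := by
    intro u
    rw [mulVec_eq, diffStep, lapl, Finset.sum_div]
    push_cast
    rw [sub_add, ← Finset.sum_sub_distrib, sub_eq_add_neg, ← Finset.sum_neg_distrib]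
    congr 1
    refine Finset.sum_congr rfl fun v _ => ?_
    unfold derr
    split_ifs <;> push_cast <;> ring
  have h3 : ∑ u, ∑ v, cc G a u v * derr G γ r x u v = ∑ u, ∑ v, if G.Adj u v then
      a u * (if u < v then derr G γ r x u v else -derr G γ r x v u) else 0 := by
    rw [sum_symm]
    refine Finset.sum_congr rfl fun u _ => Finset.sum_congr rfl fun v _ => ?_
    unfold cc
    by_cases hh : u < v ∧ G.Adj u v
    · simp only [hh, hh.1, not_lt_of_gt hh.1, and_self, if_true, if_false]
      ring
    · simp [hh]
  rw [h1, h3, ← Finset.sum_add_distrib]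
  refine Finset.sum_congr rfl fun u _ => ?_
  rw [h2, mul_add, Finset.mul_sum]
  congr 1
  refine Finset.sum_congr rfl fun v _ => ?_
  split_ifs <;> simp

lemma cc_sq (a : Fin n → ℝ) : ∑ u, ∑ v, cc G a u v ^ 2 = enrg G a := by
  unfold enrg edgeSum cc
  refine Finset.sum_congr rfl fun u _ => Finset.sum_congr rfl fun v _ => ?_
  split_ifs <;> simp

noncomputable abbrev nu : Measure ℝ := (volume : Measure ℝ).restrict (Set.Icc (0 : ℝ) 1)

instance : IsProbabilityMeasure nu := ⟨by simp [nu]⟩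

open Classical in
noncomputable def rnd (f r : ℝ) : ℝ := ((if r < Int.fract f then ⌈f⌉ else ⌊f⌋ : ℤ) : ℝ) - f

lemma rnd_measurable (f : ℝ) : Measurable (rnd f) := by
  unfold rnd
  refine Measurable.sub_const ?_ _
  have : (fun r : ℝ => ((if r < Int.fract f then ⌈f⌉ else ⌊f⌋ : ℤ) : ℝ)) =
      fun r : ℝ => if r < Int.fract f then (⌈f⌉ : ℝ) else (⌊f⌋ : ℝ) := by
    funext r; split_ifs <;> rfl
  rw [this]
  exact Measurable.ite measurableSet_Iio measurable_const measurable_const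

lemma rnd_eq (f r : ℝ) (hr : 0 ≤ r) :
    rnd f r = (Set.Iio (Int.fract f)).indicator (fun _ => (1:ℝ)) r - Int.fract f := by
  unfold rnd
  have hf := Int.self_sub_floor f
  by_cases h : r < Int.fract f
  · have h0 : Int.fract f ≠ 0 := (lt_of_le_of_lt hr h).ne'
    have := Int.ceil_eq_add_one_sub_fract h0
    simp only [h, if_true, this]
    rw [Set.indicator_of_mem (by exact h)]
    ring
  · simp only [h, if_false]
    rw [Set.indicator_of_notMem (by simpa using h)]
    linarith

lemma nu_nonneg : ∀ᵐ r ∂nu, 0 ≤ r := by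
  filter_upwards [ae_restrict_mem measurableSet_Icc] with r hr using hr.1

lemma rnd_mean (f : ℝ) : ∫ r, rnd f r ∂nu = 0 := by
  have h1 : ∫ r, rnd f r ∂nu =
      ∫ r, ((Set.Iio (Int.fract f)).indicator (fun _ => (1:ℝ)) r - Int.fract f) ∂nu := by
    refine integral_congr_ae ?_
    filter_upwards [nu_nonneg] with r hr using rnd_eq f r hr
  have h2 : nu.real (Set.Iio (Int.fract f)) = Int.fract f := by
    rw [Measure.real, Measure.restrict_apply measurableSet_Iio]
    have : Set.Iio (Int.fract f) ∩ Set.Icc 0 1 = Set.Ico 0 (Int.fract f) := by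
      ext r
      have := Int.fract_lt_one f
      simp only [Set.mem_inter_iff, Set.mem_Iio, Set.mem_Icc, Set.mem_Ico]
      constructor
      · rintro ⟨h1, h2, h3⟩; exact ⟨h2, h1⟩
      · rintro ⟨h1, h2⟩; exact ⟨h2, h1, by linarith⟩
    rw [this, Real.volume_Ico, sub_zero, ENNReal.toReal_ofReal (Int.fract_nonneg f)]
  rw [h1, integral_sub, integral_indicator measurableSet_Iio]
  · rw [setIntegral_const, h2]
    simp
  · exact (integrable_const _).indicator measurableSet_Iio
  · exact integrable_const _

lemma rnd_subG (f : ℝ) :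
    ProbabilityTheory.HasSubgaussianMGF (rnd f)
      ((‖(1 - Int.fract f) - (-Int.fract f)‖₊ / 2) ^ 2) nu := by
  refine ProbabilityTheory.hasSubgaussianMGF_of_mem_Icc_of_integral_eq_zero
    (rnd_measurable f).aemeasurable ?_ (rnd_mean f)
  filter_upwards [nu_nonneg] with r hr
  rw [rnd_eq f r hr]
  by_cases h : r ∈ Set.Iio (Int.fract f)
  · rw [Set.indicator_of_mem h]; constructor <;> linarith
  · rw [Set.indicator_of_notMem h]; constructor <;> linarith

lemma rnd_mgf (f c : ℝ) : ∫ r, Real.exp (c * rnd f r) ∂nu ≤ Real.exp (c ^ 2 / 2) := by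
  refine ((rnd_subG f).mgf_le c).trans ?_
  rw [Real.exp_le_exp]
  have : (((‖(1 - Int.fract f) - (-Int.fract f)‖₊ / 2) ^ 2 : NNReal) : ℝ) = 1 / 4 := by
    rw [show (1 - Int.fract f) - (-Int.fract f) = 1 by ring]
    simp; norm_num
  rw [this]
  nlinarith [sq_nonneg c]

lemma derr_eq (γ : ℝ) (r : Fin n → Fin n → ℝ) (x : Fin n → ℤ) (u v : Fin n) :
    derr G γ r x u v = rnd (((x v : ℝ) - (x u : ℝ)) / (γ * G.maxDegree)) (r u v) := rfl

lemma round_mgf (γ : ℝ) (x : Fin n → ℤ) (a : Fin n → ℝ) :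
    ∫⁻ η, ENNReal.ofReal (Real.exp (∑ u, ∑ v, cc G a u v *
      derr G γ (fun u v => η (u, v)) x u v)) ∂(Measure.pi fun _ : Fin n × Fin n => nu)
      ≤ ENNReal.ofReal (Real.exp (enrg G a / 2)) := by
  have e : ∀ η : Fin n × Fin n → ℝ, Real.exp (∑ u, ∑ v, cc G a u v *
      derr G γ (fun u v => η (u, v)) x u v) = ∏ i : Fin n × Fin n,
      Real.exp (cc G a i.1 i.2 *
        rnd (((x i.2 : ℝ) - (x i.1 : ℝ)) / (γ * G.maxDegree)) (η i)) := by
    intro η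
    rw [← Real.exp_sum, Fintype.sum_prod_type]
    rfl
  simp_rw [e]
  rw [← ofReal_integral_eq_lintegral_ofReal]
  · apply ENNReal.ofReal_le_ofReal
    rw [integral_fintype_prod_eq_prod (fun (i : Fin n × Fin n) (r : ℝ) =>
      Real.exp (cc G a i.1 i.2 * rnd (((x i.2 : ℝ) - (x i.1 : ℝ)) / (γ * G.maxDegree)) r))]
    rw [← cc_sq, ← Fintype.sum_prod_type (f := fun i : Fin n × Fin n => cc G a i.1 i.2 ^ 2),
      Finset.sum_div, Real.exp_sum]
    refine Finset.prod_le_prod (fun i _ => integral_nonneg fun _ => (Real.exp_pos _).le)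
      fun i _ => rnd_mgf _ _
  · exact Integrable.fintype_prod (f := fun (i : Fin n × Fin n) (r : ℝ) =>
      Real.exp (cc G a i.1 i.2 * rnd (((x i.2 : ℝ) - (x i.1 : ℝ)) / (γ * G.maxDegree)) r))
      fun i => (rnd_subG _).integrable_exp_mul _
  · exact Filter.Eventually.of_forall fun η => Finset.prod_nonneg fun _ _ => (Real.exp_pos _).le

def comb {N : Type} (t : ℕ) (p : (Fin t × N → ℝ) × (N → ℝ)) : Fin (t + 1) × N → ℝ :=
  fun i => if h : i.1.val < t then p.1 (⟨i.1.val, h⟩, i.2) else p.2 i.2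

lemma comb_meas {N : Type} (t : ℕ) : Measurable (comb (N := N) t) := by
  rw [measurable_pi_iff]
  intro i
  unfold comb
  split_ifs <;> fun_prop

lemma pi_split {N : Type} [Fintype N] (t : ℕ) :
    Measure.pi (fun _ : Fin (t + 1) × N => nu) =
      ((Measure.pi fun _ : Fin t × N => nu).prod (Measure.pi fun _ : N => nu)).map (comb t) := by
  refine Measure.pi_eq fun S hS => ?_
  rw [Measure.map_apply (comb_meas t) (MeasurableSet.univ_pi hS)]
  have : comb t ⁻¹' (Set.univ.pi S) =
      (Set.univ.pi fun i : Fin t × N => S (i.1.castSucc, i.2)) ×ˢ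
        (Set.univ.pi fun e : N => S (Fin.last t, e)) := by
    ext p
    simp only [Set.mem_preimage, Set.mem_univ_pi, Set.mem_prod]
    constructor
    · intro h
      refine ⟨fun i => ?_, fun e => ?_⟩
      · simpa [comb] using h (i.1.castSucc, i.2)
      · simpa [comb] using h (Fin.last t, e)
    · rintro ⟨h1, h2⟩ ⟨s, e⟩
      refine Fin.lastCases ?_ (fun i => ?_) s
      · simpa [comb] using h2 e
      · simpa [comb] using h1 (i, e)
  rw [this, Measure.prod_prod, Measure.pi_pi, Measure.pi_pi, Fintype.prod_prod_type,
    Fintype.prod_prod_type, Fin.prod_univ_castSucc]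

noncomputable def XX (γ : ℝ) (x : Fin n → ℤ) (t : ℕ) (ω : Fin t × Fin n × Fin n → ℝ) :
    Fin n → ℤ :=
  diffLoads G γ (fun s u v => if h : s - 1 < t then ω (⟨s - 1, h⟩, u, v) else 1) x t

lemma diffLoads_congr (γ : ℝ) (x : Fin n → ℤ) (R R' : ℕ → Fin n → Fin n → ℝ) (t : ℕ)
    (h : ∀ s < t, R (s + 1) = R' (s + 1)) : diffLoads G γ R x t = diffLoads G γ R' x t := by
  induction t with
  | zero => rfl
  | succ t ih =>
    simp only [diffLoads]
    rw [ih fun s hs => h s (by omega), h t (by omega)]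

lemma XX_succ (γ : ℝ) (x : Fin n → ℤ) (t : ℕ)
    (p : (Fin t × Fin n × Fin n → ℝ) × (Fin n × Fin n → ℝ)) :
    XX G γ x (t + 1) (comb t p) =
      diffStep G γ (fun u v => p.2 (u, v)) (XX G γ x t p.1) := by
  unfold XX
  rw [diffLoads]
  congr 1
  · funext u v
    simp [comb]
  · apply diffLoads_congr
    intro s hs
    funext u v
    simp [comb, hs, Nat.lt_succ_of_lt hs]

lemma XX_meas (γ : ℝ) (x : Fin n → ℤ) (t : ℕ) : Measurable (XX G γ x t) := by
  unfold XX
  have step : Measurable fun p : (Fin n → Fin n → ℝ) × (Fin n → ℤ) =>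
      diffStep G γ p.1 p.2 := by
    refine measurable_from_prod_countable_left fun y => ?_
    rw [measurable_pi_iff]
    intro u
    unfold diffStep
    refine Measurable.const_add (Finset.measurable_sum _ fun v _ => ?_) _
    have hfl : ∀ u v, Measurable fun r : Fin n → Fin n → ℝ => diffFlow G γ r y u v := by
      intro u v
      unfold diffFlow
      refine Measurable.ite ?_ measurable_const measurable_const
      exact measurableSet_lt (by fun_prop) measurable_const
    split_ifs
    · exact hfl _ _
    · exact (hfl _ _).neg
    · exact measurable_const
  have gen : ∀ k, Measurable fun ω : Fin t × Fin n × Fin n → ℝ =>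
      diffLoads G γ (fun s u v => if h : s - 1 < t then ω (⟨s - 1, h⟩, u, v) else 1) x k := by
    intro k
    induction k with
    | zero => exact measurable_const
    | succ k ih =>
      simp only [diffLoads]
      have hR : ∀ u v : Fin n, Measurable fun ω : Fin t × Fin n × Fin n → ℝ =>
          (if h : k + 1 - 1 < t then ω (⟨k + 1 - 1, h⟩, u, v) else 1 : ℝ) := by
        intro u v
        split_ifs <;> fun_prop
      exact step.comp (Measurable.prodMk
        (measurable_pi_iff.2 fun u => measurable_pi_iff.2 fun v => hR u v) ih)
  exact gen t

noncomputable def dev (γ : ℝ) (x : Fin n → ℤ) (t : ℕ) (ω : Fin t × Fin n × Fin n → ℝ)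
    (w : Fin n) : ℝ :=
  (XX G γ x t ω w : ℝ) - Matrix.vecMul (fun u => (x u : ℝ)) (diffMatrix G γ ^ t) w

lemma dev_succ (γ : ℝ) (x : Fin n → ℤ) (t : ℕ) (a : Fin n → ℝ)
    (p : (Fin t × Fin n × Fin n → ℝ) × (Fin n × Fin n → ℝ)) :
    ∑ w, a w * dev G γ x (t + 1) (comb t p) w =
      ∑ w, (diffMatrix G γ).mulVec a w * dev G γ x t p.1 w +
      ∑ u, ∑ v, cc G a u v * derr G γ (fun u v => p.2 (u, v)) (XX G γ x t p.1) u v := by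
  have h := step_eq G γ (fun u v => p.2 (u, v)) (XX G γ x t p.1) a
  have h2 : ∑ w, a w * Matrix.vecMul (fun u => (x u : ℝ)) (diffMatrix G γ ^ (t + 1)) w =
      ∑ w, (diffMatrix G γ).mulVec a w *
        Matrix.vecMul (fun u => (x u : ℝ)) (diffMatrix G γ ^ t) w := by
    have := Matrix.dotProduct_mulVec (Matrix.vecMul (fun u => (x u : ℝ)) (diffMatrix G γ ^ t))
      (diffMatrix G γ) a
    rw [Matrix.vecMul_vecMul, ← pow_succ] at this
    rw [dotProduct_comm, dotProduct_comm _ a] at this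
    exact this.symm
  unfold dev
  simp only [mul_sub, Finset.sum_sub_distrib, XX_succ]
  rw [h, h2]
  ring

lemma mgf_main (γ : ℝ) (x : Fin n → ℤ) (t : ℕ) : ∀ a : Fin n → ℝ,
    ∫⁻ ω, ENNReal.ofReal (Real.exp (∑ w, a w * dev G γ x t ω w))
      ∂(Measure.pi fun _ : Fin t × Fin n × Fin n => nu) ≤
    ENNReal.ofReal (Real.exp
      ((∑ s ∈ Finset.range t, enrg G ((diffMatrix G γ ^ s).mulVec a)) / 2)) := by
  induction t with
  | zero =>
    intro a
    have : ∀ ω w, dev G γ x 0 ω w = 0 := by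
      intro ω w
      simp [dev, XX, diffLoads]
    simp [this]
  | succ t ih =>
    intro a
    rw [pi_split]
    refine (lintegral_map_le _ _).trans ((lintegral_prod_le _).trans ?_)
    simp_rw [dev_succ, Real.exp_add, ENNReal.ofReal_mul (Real.exp_pos _).le]
    calc _ ≤ ∫⁻ ω, ENNReal.ofReal (Real.exp (∑ w, (diffMatrix G γ).mulVec a w * dev G γ x t ω w))
          * ENNReal.ofReal (Real.exp (enrg G a / 2))
          ∂(Measure.pi fun _ : Fin t × Fin n × Fin n => nu) := by
          refine lintegral_mono fun ω => ?_
          rw [lintegral_const_mul' _ _ ENNReal.ofReal_ne_top]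
          gcongr
          exact round_mgf G γ _ a
      _ ≤ ENNReal.ofReal (Real.exp ((∑ s ∈ Finset.range t,
            enrg G ((diffMatrix G γ ^ s).mulVec ((diffMatrix G γ).mulVec a))) / 2))
          * ENNReal.ofReal (Real.exp (enrg G a / 2)) := by
          rw [lintegral_mul_const' _ _ ENNReal.ofReal_ne_top]
          gcongr
          exact ih _
      _ = _ := by
          rw [← ENNReal.ofReal_mul (Real.exp_pos _).le, ← Real.exp_add, Finset.sum_range_succ']
          simp only [Matrix.mulVec_mulVec, ← pow_succ, pow_zero, Matrix.one_mulVec]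
          rw [add_div]

lemma tail_one (γ : ℝ) (hγ : 1 < γ) (hΔ : 0 < G.maxDegree) (x : Fin n → ℤ) (t : ℕ)
    (a : Fin n → ℝ) (b : ℝ) :
    (Measure.pi fun _ : Fin t × Fin n × Fin n => nu) {ω | b ≤ ∑ w, a w * dev G γ x t ω w} ≤
      ENNReal.ofReal (Real.exp (γ * G.maxDegree / (2 - 2 / γ) * (∑ u, a u ^ 2) / 2 - b)) := by
  have hm : Measurable fun ω => ENNReal.ofReal (Real.exp (∑ w, a w * dev G γ x t ω w)) := by
    refine ENNReal.measurable_ofReal.comp (Real.measurable_exp.comp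
      (Finset.measurable_sum _ fun w _ => Measurable.const_mul ?_ _))
    unfold dev
    refine Measurable.sub_const ?_ _
    exact (measurable_from_top (f := fun z : ℤ => (z : ℝ))).comp
      ((measurable_pi_apply w).comp (XX_meas G γ x t))
  have h1 := meas_ge_le_lintegral_div (μ := Measure.pi fun _ : Fin t × Fin n × Fin n => nu)
    hm.aemeasurable (ε := ENNReal.ofReal (Real.exp b)) (by simp [Real.exp_pos]) (by simp)
  have hs : {ω | b ≤ ∑ w, a w * dev G γ x t ω w} ⊆ {ω | ENNReal.ofReal (Real.exp b) ≤
      ENNReal.ofReal (Real.exp (∑ w, a w * dev G γ x t ω w))} := by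
    intro ω h
    exact ENNReal.ofReal_le_ofReal (Real.exp_le_exp.2 h)
  refine (measure_mono hs).trans (h1.trans ?_)
  rw [Real.exp_sub, ENNReal.ofReal_div_of_pos (Real.exp_pos b)]
  gcongr
  refine (mgf_main G γ x t a).trans ?_
  gcongr
  exact energy_sum G γ hγ hΔ t a

lemma final_bound (hn : 2 ≤ n) (γ : ℝ) (hγ : 1 < γ) (hΔ : 0 < G.maxDegree) (x : Fin n → ℤ)
    (t : ℕ) (w : Fin n) :
    (Measure.pi fun _ : Fin t × Fin n × Fin n => nu)
      {ω | 4 * Real.sqrt (Real.log n) * Real.sqrt (γ * G.maxDegree / (2 - 2 / γ)) ≤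
        |dev G γ x t ω w|} ≤ ENNReal.ofReal (2 / n ^ 2) := by
  have hn' : (2 : ℝ) ≤ n := by exact_mod_cast hn
  have hD : (0 : ℝ) < G.maxDegree := by exact_mod_cast hΔ
  have hc : 0 < 2 - 2 / γ := by
    have : 2 / γ < 2 := by rw [div_lt_iff₀ (by linarith)]; linarith
    linarith
  have hlog : 0 ≤ Real.log n := Real.log_nonneg (by linarith)
  set K := γ * G.maxDegree / (2 - 2 / γ) with hK
  have hKp : 0 < K := by positivity
  set l := Real.sqrt (Real.log n) with hl
  set k := Real.sqrt K with hk
  have hkp : 0 < k := Real.sqrt_pos.2 hKp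
  have hk2 : k ^ 2 = K := Real.sq_sqrt hKp.le
  have hl2 : l ^ 2 = Real.log n := Real.sq_sqrt hlog
  have hl0 : 0 ≤ l := Real.sqrt_nonneg _
  -- signed tails
  have one : ∀ σ : ℝ, σ ^ 2 = 1 →
      (Measure.pi fun _ : Fin t × Fin n × Fin n => nu)
        {ω | 4 * l * k ≤ σ * dev G γ x t ω w} ≤ ENNReal.ofReal (1 / n ^ 2) := by
    intro σ hσ
    have h := tail_one G γ hγ hΔ x t (Pi.single w (σ * (4 * l / k))) (16 * l ^ 2)
    have hsq : ∑ u, (Pi.single w (σ * (4 * l / k)) : Fin n → ℝ) u ^ 2 = 16 * l ^ 2 / K := by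
      rw [Finset.sum_eq_single w]
      · rw [Pi.single_eq_same, mul_pow, hσ, div_pow, hk2]; ring
      · intro u _ hu; simp [Pi.single_eq_of_ne hu]
      · simp
    have hlin : ∀ ω, ∑ u, (Pi.single w (σ * (4 * l / k)) : Fin n → ℝ) u * dev G γ x t ω u =
        (4 * l / k) * (σ * dev G γ x t ω w) := by
      intro ω
      rw [Finset.sum_eq_single w]
      · rw [Pi.single_eq_same]; ring
      · intro u _ hu; simp [Pi.single_eq_of_ne hu]
      · simp
    rw [← hK, hsq] at h
    simp_rw [hlin] at h
    refine (measure_mono ?_).trans (h.trans ?_)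
    · intro ω hω
      simp only [Set.mem_ofPred_eq] at hω ⊢
      have := mul_le_mul_of_nonneg_left hω (show 0 ≤ 4 * l / k by positivity)
      have e : 4 * l / k * (4 * l * k) = 16 * l ^ 2 := by field_simp; ring
      linarith
    · apply ENNReal.ofReal_le_ofReal
      have e : K * (16 * l ^ 2 / K) / 2 - 16 * l ^ 2 = - (8 * Real.log n) := by
        rw [← hl2]; field_simp; ring
      rw [e]
      have e2 : (1 : ℝ) / n ^ 2 = Real.exp (-(2 * Real.log n)) := by
        rw [Real.exp_neg, one_div, two_mul, Real.exp_add, Real.exp_log (by linarith), sq]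
      rw [e2, Real.exp_le_exp]
      linarith
  have hsub : {ω | 4 * l * k ≤ |dev G γ x t ω w|} ⊆
      {ω | 4 * l * k ≤ 1 * dev G γ x t ω w} ∪ {ω | 4 * l * k ≤ (-1) * dev G γ x t ω w} := by
    intro ω hω
    simp only [Set.mem_ofPred_eq, Set.mem_union] at hω ⊢
    rcases le_abs.1 hω with h | h
    · left; linarith
    · right; linarith
  refine (measure_mono hsub).trans ((measure_union_le _ _).trans ?_)
  refine (add_le_add (one 1 (by norm_num)) (one (-1) (by norm_num))).trans ?_
  rw [← ENNReal.ofReal_add (by positivity) (by positivity)]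
  apply le_of_eq
  congr 1
  ring

end helpers

open MeasureTheory in
/-- Edge-based discrete diffusion protocol with independent
uniform `[0,1]` samples (one per edge per round) used for the randomized roundings:
for any round `t`,
`P( max_w |x_w^{(t)} - ξ_w^{(t)}| ≥ 4 √(log n) √(γΔ/(2-2/γ)) ) ≤ 2/n`. -/
theorem stmt19 {n : ℕ} (hn : 2 ≤ n) (G : SimpleGraph (Fin n)) [DecidableRel G.Adj]
    (hΔ : 0 < G.maxDegree) (γ : ℝ) (hγ : 1 < γ) (x : Fin n → ℤ) (t : ℕ) :
    (Measure.pi fun _ : Fin t × Fin n × Fin n =>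
        (volume : Measure ℝ).restrict (Set.Icc (0 : ℝ) 1))
      {ω | ∃ w : Fin n,
        4 * Real.sqrt (Real.log n) * Real.sqrt (γ * G.maxDegree / (2 - 2 / γ)) ≤
          |(diffLoads G γ
              (fun s u v => if h : s - 1 < t then ω (⟨s - 1, h⟩, u, v) else 1)
              x t w : ℝ)
            - Matrix.vecMul (fun u => (x u : ℝ)) (diffMatrix G γ ^ t) w|}
      ≤ ENNReal.ofReal (2 / n) := by
  have hn' : (2 : ℝ) ≤ n := by exact_mod_cast hn
  have hset : {ω : Fin t × Fin n × Fin n → ℝ | ∃ w : Fin n,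
        4 * Real.sqrt (Real.log n) * Real.sqrt (γ * G.maxDegree / (2 - 2 / γ)) ≤
          |(diffLoads G γ
              (fun s u v => if h : s - 1 < t then ω (⟨s - 1, h⟩, u, v) else 1)
              x t w : ℝ)
            - Matrix.vecMul (fun u => (x u : ℝ)) (diffMatrix G γ ^ t) w|} =
      ⋃ w : Fin n, {ω | 4 * Real.sqrt (Real.log n) *
        Real.sqrt (γ * G.maxDegree / (2 - 2 / γ)) ≤ |dev G γ x t ω w|} := by
    ext ω
    simp only [Set.mem_ofPred_eq, Set.mem_iUnion]
    rfl
  rw [hset]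
  refine (measure_iUnion_fintype_le _ _).trans ?_
  refine (Finset.sum_le_sum fun w _ => final_bound G hn γ hγ hΔ x t w).trans ?_
  rw [Finset.sum_const, Finset.card_univ, Fintype.card_fin, nsmul_eq_mul,
    ← ENNReal.ofReal_natCast, ← ENNReal.ofReal_mul (by positivity)]
  apply ENNReal.ofReal_le_ofReal
  apply le_of_eq
  field_simp

end LB
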